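/- For every r ∈ (0, 1) there exists a constant C_r > 0 such that for all u ∈ Σ, ∫_{B_r} u(x)² dx + ∫_{B_r} |∇u(x)|² dx ≤ C_r · H(u), where B_r is the open disc of radius r centered at the origin. -/

import Mathlib

/-!
The function `φ = √(1 - |x|²)` satisfies `-Δφ/φ = 1/(1-|x|²)² + (n-1)/(1-|x|²)` in dimension `n`.
Writing `w = u/(1-|x|²)`, so that `∇u + w x = φ ∇(u/φ)`, the ground state substitution turns the
Hardy functional into
`∫ |∇u|² - ∫ u²/(1-|x|²)² = ∫ |∇u + w x|² + (n-1) ∫ u²/(1-|x|²)`.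
Indeed the integrands on the two sides differ by the divergence of the compactly supported field
`u²/(1-|x|²) x`. For `n ≥ 2` and `|x| ≤ r < 1` the right-hand integrand controls `u² + |∇u|²`
pointwise.
-/

open MeasureTheory Real Filter

noncomputable section

/-- `ℝ²` as a Euclidean space. -/
abbrev E2 : Type := EuclideanSpace ℝ (Fin 2)

/-- The open unit disc in `ℝ²`. -/
def B2 : Set E2 := Metric.ball 0 1

/-- `u ∈ C_c^∞(B)`: a smooth function with compact support contained in the open unit disc. -/
def IsTest (u : E2 → ℝ) : Prop :=
  ContDiff ℝ (⊤ : ℕ∞) u ∧ HasCompactSupport u ∧ tsupport u ⊆ B2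

/-- `u ∈ Σ`: a smooth compactly supported function on the unit disc which is radially
symmetric and nonincreasing in the radius (encoded as: `‖x‖ ≤ ‖y‖ → u y ≤ u x`, which is
equivalent to radial symmetry together with monotonicity in `r`). -/
def IsSigma (u : E2 → ℝ) : Prop :=
  IsTest u ∧ ∀ x y : E2, ‖x‖ ≤ ‖y‖ → u y ≤ u x

/-- The localized Hardy functional `H_Ω(u) = ∫_Ω |∇u|² − ∫_Ω u²/(1−|x|²)²`. -/
def HOn (Ω : Set E2) (u : E2 → ℝ) : ℝ :=
  (∫ x in Ω, ‖gradient u x‖ ^ 2) - ∫ x in Ω, (u x) ^ 2 / (1 - ‖x‖ ^ 2) ^ 2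

/-- The Hardy functional `H(u) = H_B(u)`. -/
def H (u : E2 → ℝ) : ℝ := HOn B2 u

/-- The point `(r, 0) ∈ ℝ²`, used to evaluate a radial function at radius `r`. -/
def pt (r : ℝ) : E2 := EuclideanSpace.single 0 r

open Module Metric

section Calculus

lemma hasCompactSupport_of_tsupport_subset_ball {X Y : Type*} [PseudoMetricSpace X]
    [ProperSpace X] [Zero Y] {u : X → Y} {c : X} {R : ℝ} (hs : tsupport u ⊆ ball c R) :
    HasCompactSupport u :=
  isCompact_of_isClosed_isBounded (isClosed_tsupport u) (isBounded_ball.subset hs)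

lemma integrable_of_eq_zero_of_notMem_tsupport {X Y F : Type*} [TopologicalSpace X] [R1Space X]
    [MeasurableSpace X] [OpensMeasurableSpace X] {μ : Measure X} [IsFiniteMeasureOnCompacts μ]
    [Zero Y] [NormedAddCommGroup F] {u : X → Y} {g : X → F} (hu : HasCompactSupport u)
    (hg : Continuous g) (h : ∀ x, x ∉ tsupport u → g x = 0) : Integrable g μ :=
  hg.integrable_of_hasCompactSupport (HasCompactSupport.intro hu h)

lemma hasFDerivAt_div {𝕜 E : Type*} [NontriviallyNormedField 𝕜] [NormedAddCommGroup E]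
    [NormedSpace 𝕜 E] {f g : E → 𝕜} {f' g' : E →L[𝕜] 𝕜} {x : E} (hf : HasFDerivAt f f' x)
    (hg : HasFDerivAt g g' x) (hx : g x ≠ 0) :
    HasFDerivAt (fun y => f y / g y) ((g x ^ 2)⁻¹ • (g x • f' - f x • g')) x := by
  simp only [div_eq_mul_inv]
  convert! hf.fun_mul ((hasDerivAt_inv hx).comp_hasFDerivAt x hg) using 1
  ext v
  simp only [smul_apply, sub_apply, smul_eq_mul, Function.comp_apply, add_apply, neg_mul, mul_neg]
  field_simp
  ring

lemma contDiff_div_of_tsupport {𝕜 E : Type*} [NontriviallyNormedField 𝕜] [NormedAddCommGroup E]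
    [NormedSpace 𝕜 E] {n : WithTop ℕ∞} {f g : E → 𝕜} (hf : ContDiff 𝕜 n f) (hg : ContDiff 𝕜 n g)
    (h : ∀ x ∈ tsupport f, g x ≠ 0) : ContDiff 𝕜 n fun x => f x / g x := by
  refine contDiff_iff_contDiffAt.2 fun x => ?_
  by_cases hx : x ∈ tsupport f
  · exact hf.contDiffAt.div hg.contDiffAt (h x hx)
  · refine (contDiffAt_const (c := 0)).congr_of_eventuallyEq ?_
    filter_upwards [notMem_tsupport_iff_eventuallyEq.1 hx] with y hy
    simp [hy]

lemma continuous_gradient {𝕜 E : Type*} [RCLike 𝕜] [NormedAddCommGroup E]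
    [InnerProductSpace 𝕜 E] [CompleteSpace E] {f : E → 𝕜} (hf : ContDiff 𝕜 1 f) :
    Continuous (gradient f) :=
  (InnerProductSpace.toDual 𝕜 E).symm.continuous.comp (hf.continuous_fderiv one_ne_zero)

lemma gradient_of_notMem_tsupport {𝕜 E : Type*} [RCLike 𝕜] [NormedAddCommGroup E]
    [InnerProductSpace 𝕜 E] [CompleteSpace E] {f : E → 𝕜} {x : E} (hx : x ∉ tsupport f) :
    gradient f x = 0 := by
  rw [gradient, fderiv_of_notMem_tsupport 𝕜 hx, map_zero]

lemma integrable_norm_gradient_sq {𝕜 E : Type*} [RCLike 𝕜] [NormedAddCommGroup E]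
    [InnerProductSpace 𝕜 E] [CompleteSpace E] [MeasurableSpace E] [OpensMeasurableSpace E]
    {μ : Measure E} [IsFiniteMeasureOnCompacts μ] {f : E → 𝕜} (hf : ContDiff 𝕜 1 f)
    (hc : HasCompactSupport f) : Integrable (fun x => ‖gradient f x‖ ^ 2) μ :=
  integrable_of_eq_zero_of_notMem_tsupport hc ((continuous_gradient hf).norm.pow 2)
    fun x hx => by simp [gradient_of_notMem_tsupport hx]

lemma integrable_fderiv_apply_self {E F : Type*} [NormedAddCommGroup E] [NormedSpace ℝ E]
    [MeasurableSpace E] [OpensMeasurableSpace E] {μ : Measure E} [IsFiniteMeasureOnCompacts μ]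
    [NormedAddCommGroup F] [NormedSpace ℝ F] {f : E → F} (hf : ContDiff ℝ 1 f)
    (hc : HasCompactSupport f) : Integrable (fun x => fderiv ℝ f x x) μ :=
  integrable_of_eq_zero_of_notMem_tsupport hc
    ((hf.continuous_fderiv one_ne_zero).clm_apply continuous_id)
    fun x hx => by rw [fderiv_of_notMem_tsupport ℝ hx, zero_apply]

lemma integral_fderiv_apply_self {E F : Type*} [NormedAddCommGroup E] [NormedSpace ℝ E]
    [FiniteDimensional ℝ E] [MeasurableSpace E] [BorelSpace E] {μ : Measure E}
    [μ.IsAddHaarMeasure] [NormedAddCommGroup F] [NormedSpace ℝ F] {f : E → F}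
    (hf : ContDiff ℝ 1 f) (hc : HasCompactSupport f) :
    ∫ x, fderiv ℝ f x x ∂μ = -(finrank ℝ E : ℝ) • ∫ x, f x ∂μ := by
  let b := finBasis ℝ E
  let coord (i) : E →L[ℝ] ℝ := (b.coord i).toContinuousLinearMap
  have hfderiv (x : E) : fderiv ℝ f x x = ∑ i, coord i x • fderiv ℝ f x (b i) := calc
    fderiv ℝ f x x = fderiv ℝ f x (∑ i, coord i x • b i) :=
      congrArg (fderiv ℝ f x) (b.sum_repr x).symm
    _ = ∑ i, coord i x • fderiv ℝ f x (b i) := by simp only [map_sum, map_smul]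
  have hint (i) : Integrable (fun x => coord i x • fderiv ℝ f x (b i)) μ :=
    ((coord i).continuous.smul ((hf.continuous_fderiv one_ne_zero).clm_apply continuous_const))
      |>.integrable_of_hasCompactSupport (hc.fderiv_apply ℝ (b i)).smul_left
  have hcoord (i) (x : E) : fderiv ℝ (coord i) x (b i) = 1 := by
    rw [(coord i).fderiv]
    simp [coord]
  have hparts (i) : ∫ x, coord i x • fderiv ℝ f x (b i) ∂μ = -∫ x, f x ∂μ := by
    rw [integral_smul_fderiv_eq_neg_fderiv_smul_of_integrable ?_ (hint i) ?_
      (fun x _ => (coord i).differentiableAt) (fun x _ => hf.differentiable one_ne_zero x)]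
    · simp only [hcoord, one_smul]
    · simpa only [hcoord, one_smul] using hf.continuous.integrable_of_hasCompactSupport hc
    · exact ((coord i).continuous.smul hf.continuous).integrable_of_hasCompactSupport hc.smul_left
  simp only [hfderiv, integral_finsetSum _ fun i _ => hint i, hparts, Finset.sum_const,
    Finset.card_univ, Fintype.card_fin, ← Nat.cast_smul_eq_nsmul ℝ, smul_neg, neg_smul]

end Calculus

section GroundState

lemma one_sub_norm_sq_pos {E : Type*} [SeminormedAddGroup E] {x : E} (hx : ‖x‖ < 1) :
    0 < 1 - ‖x‖ ^ 2 :=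
  sub_pos.2 (pow_lt_one₀ (norm_nonneg x) hx two_ne_zero)

lemma one_sub_norm_sq_ne_zero_of_mem_tsupport {E : Type*} [SeminormedAddGroup E]
    {u : E → ℝ} (hs : tsupport u ⊆ ball 0 1) :
    ∀ x ∈ tsupport u, 1 - ‖x‖ ^ 2 ≠ 0 := fun _ hx =>
  (one_sub_norm_sq_pos (mem_ball_zero_iff.1 (hs hx))).ne'

variable {E : Type*} [NormedAddCommGroup E] [InnerProductSpace ℝ E]

lemma contDiff_div_one_sub_norm_sq {n : WithTop ℕ∞} {u : E → ℝ} (hu : ContDiff ℝ n u)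
    (hs : tsupport u ⊆ ball 0 1) : ContDiff ℝ n fun x => u x / (1 - ‖x‖ ^ 2) :=
  contDiff_div_of_tsupport hu (contDiff_const.sub (contDiff_norm_sq ℝ))
    (one_sub_norm_sq_ne_zero_of_mem_tsupport hs)

lemma contDiff_sq_div_one_sub_norm_sq {n : WithTop ℕ∞} {u : E → ℝ} (hu : ContDiff ℝ n u)
    (hs : tsupport u ⊆ ball 0 1) : ContDiff ℝ n fun x => u x ^ 2 / (1 - ‖x‖ ^ 2) := by
  simpa only [sq (u _), mul_div_assoc] using hu.mul (contDiff_div_one_sub_norm_sq hu hs)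

lemma fderiv_sq_div_one_sub_norm_sq_apply_self {u : E → ℝ} {x : E} (hu : DifferentiableAt ℝ u x)
    (hx : 1 - ‖x‖ ^ 2 ≠ 0) :
    fderiv ℝ (fun y => u y ^ 2 / (1 - ‖y‖ ^ 2)) x x =
      2 * (u x / (1 - ‖x‖ ^ 2)) * fderiv ℝ u x x + 2 * ‖x‖ ^ 2 * (u x / (1 - ‖x‖ ^ 2)) ^ 2 := by
  have hs : HasFDerivAt (fun y : E => 1 - ‖y‖ ^ 2) (-(2 • innerSL ℝ x)) x :=
    (hasStrictFDerivAt_norm_sq x).hasFDerivAt.const_sub 1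
  rw [(hasFDerivAt_div (hu.hasFDerivAt.pow 2) hs hx).fderiv]
  simp only [Nat.add_one_sub_one, pow_one, nsmul_eq_mul, Nat.cast_ofNat, smul_neg, sub_neg_eq_add,
    add_apply, smul_apply, smul_eq_mul, coe_innerSL_apply, inner_self_eq_norm_sq_to_K,
    ringHom_apply]
  field_simp

variable [FiniteDimensional ℝ E]

/-- The Hardy functional `∫ |∇u|² - ∫ u²/(1-|x|²)²` of the unit ball of a Euclidean space `E`,
with respect to a measure `μ`; it is `H` when `E` is the plane with Lebesgue measure. -/
def hardyEnergy [MeasurableSpace E] (μ : Measure E) (u : E → ℝ) : ℝ :=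
  (∫ x in ball 0 1, ‖gradient u x‖ ^ 2 ∂μ) - ∫ x in ball 0 1, u x ^ 2 / (1 - ‖x‖ ^ 2) ^ 2 ∂μ

/-- The density `|∇u + u/(1-|x|²) x|² + (n-1) u²/(1-|x|²)`, with `n` the dimension, whose integral
is the Hardy functional of `u` after substituting the ground state `√(1-|x|²)`. -/
def groundStateDensity (u : E → ℝ) (x : E) : ℝ :=
  ‖gradient u x + (u x / (1 - ‖x‖ ^ 2)) • x‖ ^ 2 +
    (finrank ℝ E - 1) * (u x ^ 2 / (1 - ‖x‖ ^ 2))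

lemma groundStateDensity_of_notMem_tsupport {u : E → ℝ} {x : E} (hx : x ∉ tsupport u) :
    groundStateDensity u x = 0 := by
  simp [groundStateDensity, gradient_of_notMem_tsupport hx, image_eq_zero_of_notMem_tsupport hx]

lemma groundStateDensity_nonneg {u : E → ℝ} {x : E} (hE : 1 ≤ finrank ℝ E) (hx : ‖x‖ < 1) :
    0 ≤ groundStateDensity u x := by
  have hs := one_sub_norm_sq_pos hx
  have hn : 0 ≤ (finrank ℝ E - 1 : ℝ) := sub_nonneg.2 (by exact_mod_cast hE)
  unfold groundStateDensity
  positivity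

lemma groundStateDensity_eq_sub_add_div {u : E → ℝ} {x : E} (hu : DifferentiableAt ℝ u x)
    (hx : 1 - ‖x‖ ^ 2 ≠ 0) :
    groundStateDensity u x = ‖gradient u x‖ ^ 2 - (u x / (1 - ‖x‖ ^ 2)) ^ 2 +
      (finrank ℝ E * (u x ^ 2 / (1 - ‖x‖ ^ 2)) +
        fderiv ℝ (fun y => u y ^ 2 / (1 - ‖y‖ ^ 2)) x x) := by
  rw [groundStateDensity, fderiv_sq_div_one_sub_norm_sq_apply_self hu hx, norm_add_sq_real,
    inner_smul_right, inner_gradient_left, norm_smul, mul_pow, Real.norm_eq_abs, sq_abs]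
  field_simp
  ring

lemma sq_add_norm_gradient_sq_le_groundStateDensity {u : E → ℝ} {x : E} {r : ℝ}
    (hE : 2 ≤ finrank ℝ E) (hr : r < 1) (hx : ‖x‖ ≤ r) :
    u x ^ 2 + ‖gradient u x‖ ^ 2 ≤ (2 + 2 / (1 - r)) * groundStateDensity u x := by
  have hx1 : ‖x‖ ^ 2 ≤ 1 := pow_le_one₀ (norm_nonneg x) (hx.trans hr.le)
  have hs : 0 < 1 - ‖x‖ ^ 2 := one_sub_norm_sq_pos (hx.trans_lt hr)
  have hr' : 0 < 1 - r := sub_pos.2 hr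
  have hrs : 1 - r ≤ 1 - ‖x‖ ^ 2 := by nlinarith [norm_nonneg x]
  set w := u x / (1 - ‖x‖ ^ 2) with hw
  set a := ‖gradient u x + w • x‖ ^ 2
  set q := u x ^ 2 / (1 - ‖x‖ ^ 2) with hq
  have hq0 : 0 ≤ q := by positivity
  have hdens : a + q ≤ groundStateDensity u x := by
    have hn : (1 : ℝ) ≤ finrank ℝ E - 1 := by
      rw [le_sub_iff_add_le]
      exact_mod_cast hE
    exact add_le_add_right (le_mul_of_one_le_left hq0 hn) a
  have hu : u x ^ 2 ≤ q := le_div_self (sq_nonneg _) hs (sub_le_self 1 (sq_nonneg _))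
  have hwx : ‖w • x‖ ^ 2 ≤ q / (1 - r) := calc
    ‖w • x‖ ^ 2 = w ^ 2 * ‖x‖ ^ 2 := by rw [norm_smul, mul_pow, Real.norm_eq_abs, sq_abs]
    _ ≤ w ^ 2 := mul_le_of_le_one_right (sq_nonneg w) hx1
    _ = q / (1 - ‖x‖ ^ 2) := by rw [hw, hq, div_pow, sq (1 - ‖x‖ ^ 2), div_div]
    _ ≤ q / (1 - r) := div_le_div_of_nonneg_left hq0 hr' hrs
  have hgrad : ‖gradient u x‖ ^ 2 ≤ 2 * a + 2 * ‖w • x‖ ^ 2 := by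
    have h := parallelogram_law_with_norm ℝ (gradient u x + w • x) (w • x)
    rw [add_sub_cancel_right] at h
    linarith [mul_self_nonneg ‖gradient u x + w • x + w • x‖]
  calc u x ^ 2 + ‖gradient u x‖ ^ 2 ≤ q + (2 * a + 2 * (q / (1 - r))) := by linarith
    _ ≤ (2 + 2 / (1 - r)) * (a + q) := by
      have : 0 ≤ 2 / (1 - r) * a := by positivity
      have : 2 * (q / (1 - r)) = 2 / (1 - r) * q := by ring
      linarith
    _ ≤ (2 + 2 / (1 - r)) * groundStateDensity u x := by gcongr

end GroundState

section Integral

variable {E : Type*} [NormedAddCommGroup E] [InnerProductSpace ℝ E] [FiniteDimensional ℝ E]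
  [MeasurableSpace E] [BorelSpace E] {μ : Measure E} {u : E → ℝ}

lemma integrable_groundStateDensity [IsFiniteMeasureOnCompacts μ] (hu : ContDiff ℝ 1 u)
    (hs : tsupport u ⊆ ball 0 1) : Integrable (groundStateDensity u) μ := by
  have hgrad := continuous_gradient hu
  have hw := (contDiff_div_one_sub_norm_sq hu hs).continuous
  have hq := (contDiff_sq_div_one_sub_norm_sq hu hs).continuous
  exact integrable_of_eq_zero_of_notMem_tsupport (hasCompactSupport_of_tsupport_subset_ball hs)
    (by unfold groundStateDensity; fun_prop) fun x hx => groundStateDensity_of_notMem_tsupport hx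

lemma hardyEnergy_eq_integral_sub [IsFiniteMeasureOnCompacts μ] (hu : ContDiff ℝ 1 u)
    (hs : tsupport u ⊆ ball 0 1) :
    hardyEnergy μ u = ∫ x, (‖gradient u x‖ ^ 2 - (u x / (1 - ‖x‖ ^ 2)) ^ 2) ∂μ := by
  have hc := hasCompactSupport_of_tsupport_subset_ball hs
  have hw : Integrable (fun x => (u x / (1 - ‖x‖ ^ 2)) ^ 2) μ :=
    integrable_of_eq_zero_of_notMem_tsupport hc
      ((contDiff_div_one_sub_norm_sq hu hs).continuous.pow 2)
      fun x hx => by simp [image_eq_zero_of_notMem_tsupport hx]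
  simp only [hardyEnergy, ← div_pow]
  rw [integral_sub (integrable_norm_gradient_sq hu hc) hw,
    setIntegral_eq_integral_of_forall_compl_eq_zero fun x hx => by
      simp [gradient_of_notMem_tsupport fun h => hx (hs h)],
    setIntegral_eq_integral_of_forall_compl_eq_zero fun x hx => by
      simp [image_eq_zero_of_notMem_tsupport fun h => hx (hs h)]]

lemma hardyEnergy_eq_integral_groundStateDensity [μ.IsAddHaarMeasure] (hu : ContDiff ℝ 1 u)
    (hs : tsupport u ⊆ ball 0 1) : hardyEnergy μ u = ∫ x, groundStateDensity u x ∂μ := by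
  set q : E → ℝ := fun x => u x ^ 2 / (1 - ‖x‖ ^ 2) with hq
  have hqsupp : tsupport q ⊆ tsupport u :=
    closure_mono fun x hx h => hx (by simp [hq, h])
  have hqdiff : ContDiff ℝ 1 q := contDiff_sq_div_one_sub_norm_sq hu hs
  have hqc : HasCompactSupport q :=
    hasCompactSupport_of_tsupport_subset_ball (hqsupp.trans hs)
  have hq_int : Integrable (fun x => finrank ℝ E * q x) μ :=
    (hqdiff.continuous.integrable_of_hasCompactSupport hqc).const_mul _
  have hq'_int : Integrable (fun x => fderiv ℝ q x x) μ :=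
    integrable_fderiv_apply_self hqdiff hqc
  have hdiv : ∫ x, (finrank ℝ E * q x + fderiv ℝ q x x) ∂μ = 0 := by
    rw [integral_add hq_int hq'_int, integral_const_mul, integral_fderiv_apply_self hqdiff hqc,
      smul_eq_mul, neg_mul, add_neg_cancel]
  have hpointwise (x : E) : ‖gradient u x‖ ^ 2 - (u x / (1 - ‖x‖ ^ 2)) ^ 2 =
      groundStateDensity u x - (finrank ℝ E * q x + fderiv ℝ q x x) := by
    by_cases hx : x ∈ tsupport u
    · rw [groundStateDensity_eq_sub_add_div (hu.differentiable one_ne_zero x)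
        (one_sub_norm_sq_ne_zero_of_mem_tsupport hs x hx), add_sub_cancel_right]
    · have hqx : x ∉ tsupport q := fun h => hx (hqsupp h)
      simp [groundStateDensity_of_notMem_tsupport hx, gradient_of_notMem_tsupport hx,
        image_eq_zero_of_notMem_tsupport hx, image_eq_zero_of_notMem_tsupport hqx,
        fderiv_of_notMem_tsupport ℝ hqx]
  simp only [hardyEnergy_eq_integral_sub hu hs, hpointwise]
  rw [integral_sub (integrable_groundStateDensity hu hs) (hq_int.fun_add hq'_int), hdiv, sub_zero]

lemma setIntegral_groundStateDensity_le_hardyEnergy [μ.IsAddHaarMeasure]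
    (hE : 1 ≤ finrank ℝ E) (hu : ContDiff ℝ 1 u) (hs : tsupport u ⊆ ball 0 1) (s : Set E) :
    ∫ x in s, groundStateDensity u x ∂μ ≤ hardyEnergy μ u := by
  rw [hardyEnergy_eq_integral_groundStateDensity hu hs]
  refine setIntegral_le_integral (integrable_groundStateDensity hu hs) (.of_forall fun x => ?_)
  by_cases hx : x ∈ tsupport u
  · exact groundStateDensity_nonneg hE (mem_ball_zero_iff.1 (hs hx))
  · exact (groundStateDensity_of_notMem_tsupport hx).ge

variable (μ) in
theorem local_H1_bound_by_hardy_general [μ.IsAddHaarMeasure] (hE : 2 ≤ finrank ℝ E) {r : ℝ}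
    (hr : r < 1) :
    ∃ C : ℝ, 0 < C ∧ ∀ u : E → ℝ, ContDiff ℝ 1 u → tsupport u ⊆ ball 0 1 →
      (∫ x in ball 0 r, u x ^ 2 ∂μ) + (∫ x in ball 0 r, ‖gradient u x‖ ^ 2 ∂μ) ≤
        C * hardyEnergy μ u := by
  have hC : 0 < 2 + 2 / (1 - r) := add_pos two_pos (div_pos two_pos (sub_pos.2 hr))
  refine ⟨2 + 2 / (1 - r), hC, fun u hu hs => ?_⟩
  have hc := hasCompactSupport_of_tsupport_subset_ball hs
  have hu2 : Integrable (fun x => u x ^ 2) μ :=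
    integrable_of_eq_zero_of_notMem_tsupport hc (hu.continuous.pow 2)
      fun x hx => by simp [image_eq_zero_of_notMem_tsupport hx]
  have hgrad := integrable_norm_gradient_sq (μ := μ) hu hc
  have hdens := (integrable_groundStateDensity (μ := μ) hu hs).const_mul (2 + 2 / (1 - r))
  calc (∫ x in ball 0 r, u x ^ 2 ∂μ) + (∫ x in ball 0 r, ‖gradient u x‖ ^ 2 ∂μ)
      = ∫ x in ball 0 r, (u x ^ 2 + ‖gradient u x‖ ^ 2) ∂μ :=
        (integral_add hu2.integrableOn hgrad.integrableOn).symm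
    _ ≤ ∫ x in ball 0 r, (2 + 2 / (1 - r)) * groundStateDensity u x ∂μ :=
        setIntegral_mono_on (hu2.add hgrad).integrableOn hdens.integrableOn measurableSet_ball
          fun x hx => sq_add_norm_gradient_sq_le_groundStateDensity hE hr
            (mem_ball_zero_iff.1 hx).le
    _ = (2 + 2 / (1 - r)) * ∫ x in ball 0 r, groundStateDensity u x ∂μ :=
        integral_const_mul _ _
    _ ≤ (2 + 2 / (1 - r)) * hardyEnergy μ u := by
        gcongr
        exact setIntegral_groundStateDensity_le_hardyEnergy (by lia) hu hs _

end Integral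

/-- Estimate (2.4) in Lemma 1: for every `r ∈ (0, 1)` there is `C_r > 0` such that
`∫_{B_r} u² + ∫_{B_r} |∇u|² ≤ C_r H(u)` for all `u ∈ Σ`. -/
theorem local_H1_bound_by_hardy :
    ∀ r : ℝ, 0 < r → r < 1 →
      ∃ Cr : ℝ, 0 < Cr ∧ ∀ u : E2 → ℝ, IsSigma u →
        (∫ x in Metric.ball (0 : E2) r, (u x) ^ 2)
          + (∫ x in Metric.ball (0 : E2) r, ‖gradient u x‖ ^ 2) ≤ Cr * H u := by
  intro r _ hr
  obtain ⟨C, hC, hbound⟩ := local_H1_bound_by_hardy_general (E := E2) volume (by simp) hr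
  exact ⟨C, hC, fun u hu => hbound u (hu.1.1.of_le (by exact_mod_cast le_top)) hu.1.2.2⟩
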